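/- Let T > 0 and let f : [0,T] → ℝ be Lebesgue integrable. Then there exists a sequence of finite partitions 0 = t_k^0 < t_k^1 < ⋯ < t_k^{m_k} = T of [0,T], with mesh sup_{1 ≤ i ≤ m_k} (t_k^i − t_k^{i−1}) → 0 as k → ∞, such that the Riemann sums Σ_{i=1}^{m_k} f(t_k^i) (t_k^i − t_k^{i−1}) converge to ∫_0^T f(t) dt as k → ∞. -/

import Mathlib

open MeasureTheory Filter Topology


theorem riemann_aux (T : ℝ) (hT : 0 < T) (f : ℝ → ℝ) (hf : Integrable f) (ε : ℝ) (hε : 0 < ε) :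
    ∃ (m : ℕ) (t : ℕ → ℝ), 0 < m ∧ t 0 = 0 ∧ t m = T ∧ (∀ i < m, t i < t (i + 1)) ∧
      (∀ i < m, t (i + 1) - t i ≤ ε) ∧
      |∑ i ∈ Finset.range m, f (t (i + 1)) * (t (i + 1) - t i) - ∫ s in (0 : ℝ)..T, f s| ≤ ε := by
  obtain ⟨g, hgc, hfg, hg, hgi⟩ :=
    hf.exists_hasCompactSupport_integral_sub_le (ε := ε / 4) (by positivity)
  have huc : UniformContinuous g := hgc.uniformContinuous_of_continuous hg
  obtain ⟨δ, hδ, hgδ⟩ := Metric.uniformContinuous_iff.1 huc (ε / (4 * T)) (by positivity)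
  have hφi : Integrable (fun x => |f x - g x|) := (hf.sub hgi).abs
  have hφint : ∫ s in (0 : ℝ)..T, |f s - g s| ≤ ε / 4 := by
    rw [intervalIntegral.integral_of_le hT.le]
    refine le_trans (setIntegral_le_integral hφi (ae_of_all _ fun x => abs_nonneg _)) ?_
    simpa [Real.norm_eq_abs] using hfg
  -- the number of steps
  obtain ⟨n, hn⟩ := exists_nat_gt (T / (min (min ε δ) (ε / (4 * (|f T - g T| + 1)))))
  have hmin : 0 < min (min ε δ) (ε / (4 * (|f T - g T| + 1))) := by positivity
  have hn0 : (0 : ℝ) < n := lt_of_le_of_lt (by positivity) hn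
  obtain ⟨h, hh⟩ : ∃ h, h = T / n := ⟨_, rfl⟩
  have hh0 : 0 < h := by rw [hh]; positivity
  have hnh : n * h = T := by rw [hh]; field_simp
  have hlt : h < min (min ε δ) (ε / (4 * (|f T - g T| + 1))) := by
    rw [div_lt_iff₀ hmin] at hn
    rw [hh, div_lt_iff₀ hn0]; linarith
  simp only [lt_min_iff] at hlt
  obtain ⟨⟨hhε, hhδ⟩, hhT⟩ := hlt
  have hlast : |f T - g T| * h ≤ ε / 4 := by
    rw [lt_div_iff₀ (by positivity)] at hhT
    nlinarith [abs_nonneg (f T - g T)]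
  -- the shift
  have hshift : ∫ a in (0 : ℝ)..h, ∑ i ∈ Finset.range n, |f (a + i * h) - g (a + i * h)|
      = ∫ s in (0 : ℝ)..T, |f s - g s| := by
    rw [intervalIntegral.integral_finsetSum]
    · have h1 := intervalIntegral.sum_integral_adjacent_intervals (μ := volume)
        (f := fun s => |f s - g s|) (a := fun i : ℕ => (i : ℝ) * h) (n := n)
        (fun k _ => hφi.intervalIntegrable)
      simp only [hnh, Nat.cast_zero, zero_mul] at h1
      rw [← h1]
      refine Finset.sum_congr rfl fun i _ => ?_
      rw [intervalIntegral.integral_comp_add_right (fun s => |f s - g s|)]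
      congr 1
      · ring
      · push_cast; ring
    · intro i _
      exact (hφi.comp_add_right (i * h)).intervalIntegrable
  obtain ⟨a, ha, hale⟩ : ∃ a ∈ Set.Ioo 0 h,
      ∑ i ∈ Finset.range n, |f (a + i * h) - g (a + i * h)| ≤ ε / 4 / h := by
    have hint : IntegrableOn
        (fun a => ∑ i ∈ Finset.range n, |f (a + i * h) - g (a + i * h)|) (Set.Ioo 0 h) :=
      (integrable_finsetSum (Finset.range n)
        fun (i : ℕ) _ => hφi.comp_add_right ((i : ℝ) * h)).integrableOn
    obtain ⟨a, ha, hle⟩ := exists_le_setAverage (μ := volume) (s := Set.Ioo 0 h)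
      (by simp [hh0]) (by simp) hint
    refine ⟨a, ha, hle.trans ?_⟩
    rw [setAverage_eq, ← integral_Ioc_eq_integral_Ioo, ← intervalIntegral.integral_of_le hh0.le,
      hshift]
    simp only [Real.volume_real_Ioo_of_le hh0.le, sub_zero, smul_eq_mul]
    rw [div_eq_inv_mul (ε / 4)]
    gcongr
  obtain ⟨ha0, hah⟩ := ha
  obtain ⟨t, ht⟩ : ∃ t : ℕ → ℝ, t = fun i => if i = 0 then 0 else if i ≤ n then
    a + ((i : ℝ) - 1) * h else T := ⟨_, rfl⟩
  have ht0 : t 0 = 0 := by simp [ht]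
  have htm : t (n + 1) = T := by simp [ht]
  have hti : ∀ i < n, t (i + 1) = a + i * h := by
    intro i hi
    simp [ht, Nat.succ_le_of_lt hi]
  have hΔ : ∀ i < n + 1, t i < t (i + 1) ∧ t (i + 1) - t i ≤ h := by
    intro i hi
    rcases Nat.lt_succ_iff_lt_or_eq.1 hi with hi | hi
    · rw [hti i hi]
      rcases i with _ | j
      · rw [ht0]; simp; exact ⟨ha0, hah.le⟩
      · rw [hti j (by omega)]; push_cast
        constructor <;> nlinarith
    · subst hi
      rw [htm]
      rcases i with _ | j
      · simp at hn0
      · rw [hti j (by omega), ← hnh]; push_cast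
        constructor <;> nlinarith
  refine ⟨n + 1, t, by omega, ht0, htm, fun i hi => (hΔ i hi).1,
    fun i hi => (hΔ i hi).2.trans hhε.le, ?_⟩
  have hA : |∑ i ∈ Finset.range (n + 1), (f (t (i + 1)) - g (t (i + 1))) * (t (i + 1) - t i)|
      ≤ ε / 4 + ε / 4 := by
    calc _ ≤ ∑ i ∈ Finset.range (n + 1), |f (t (i + 1)) - g (t (i + 1))| * h := by
          refine (Finset.abs_sum_le_sum_abs _ _).trans (Finset.sum_le_sum fun i hi => ?_)
          have := hΔ i (Finset.mem_range.1 hi)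
          rw [abs_mul, abs_of_pos (sub_pos.2 this.1)]
          exact mul_le_mul_of_nonneg_left this.2 (abs_nonneg _)
      _ = (∑ i ∈ Finset.range n, |f (a + i * h) - g (a + i * h)|) * h + |f T - g T| * h := by
          rw [Finset.sum_range_succ, htm, Finset.sum_mul]
          congr 1
          refine Finset.sum_congr rfl fun i hi => ?_
          rw [hti i (Finset.mem_range.1 hi)]
      _ ≤ ε / 4 + ε / 4 := by
          refine add_le_add ?_ hlast
          rwa [← le_div_iff₀ hh0]
  have hB : |∑ i ∈ Finset.range (n + 1), g (t (i + 1)) * (t (i + 1) - t i)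
      - ∫ s in (0 : ℝ)..T, g s| ≤ ε / 4 := by
    have h1 := intervalIntegral.sum_integral_adjacent_intervals (μ := volume)
        (f := g) (a := t) (n := n + 1) (fun k _ => hgi.intervalIntegrable)
    rw [ht0, htm] at h1
    rw [← h1, ← Finset.sum_sub_distrib]
    calc _ ≤ ∑ i ∈ Finset.range (n + 1), ε / (4 * T) * (t (i + 1) - t i) := by
          refine (Finset.abs_sum_le_sum_abs _ _).trans (Finset.sum_le_sum fun i hi => ?_)
          obtain ⟨h2, h3⟩ := hΔ i (Finset.mem_range.1 hi)
          have h4 : g (t (i + 1)) * (t (i + 1) - t i) - ∫ s in (t i)..(t (i + 1)), g s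
              = ∫ s in (t i)..(t (i + 1)), (g (t (i + 1)) - g s) := by
            rw [intervalIntegral.integral_sub (by simp) hgi.intervalIntegrable]
            simp [mul_comm]
          rw [h4, ← Real.norm_eq_abs]
          refine (intervalIntegral.norm_integral_le_of_norm_le_const
            (C := ε / (4 * T)) fun s hs => ?_).trans ?_
          · rw [Set.uIoc_of_le h2.le] at hs
            rw [← dist_eq_norm]
            refine (hgδ ?_).le
            rw [Real.dist_eq, abs_of_nonneg (by linarith [hs.2])]
            linarith [hs.1]
          · rw [abs_of_pos (sub_pos.2 h2)]
      _ = ε / 4 := by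
          rw [← Finset.mul_sum, Finset.sum_range_sub, htm, ht0]
          field_simp
          ring
  have hC : |(∫ s in (0 : ℝ)..T, g s) - ∫ s in (0 : ℝ)..T, f s| ≤ ε / 4 := by
    rw [abs_sub_comm,
      ← intervalIntegral.integral_sub hf.intervalIntegrable hgi.intervalIntegrable]
    exact (intervalIntegral.abs_integral_le_integral_abs hT.le).trans hφint
  simp only [sub_mul, Finset.sum_sub_distrib] at hA
  simp only [abs_le] at *
  constructor <;> simp only [mul_sub, Finset.sum_sub_distrib] at * <;> linarith

/-- For every Lebesgue integrable `f : [0,T] → ℝ` there exists a sequence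
of finite partitions `0 = t_k^0 < t_k^1 < ⋯ < t_k^{m_k} = T` of `[0,T]`, with mesh tending
to `0`, whose right-endpoint Riemann sums `∑ i, f(t_k^i) (t_k^i − t_k^{i−1})` converge to
the Lebesgue integral `∫_0^T f(t) dt`. -/
theorem statement4
    (T : ℝ) (hT : 0 < T) (f : ℝ → ℝ) (hf : IntegrableOn f (Set.Icc 0 T)) :
    ∃ (m : ℕ → ℕ) (t : ℕ → ℕ → ℝ),
      (∀ k, 0 < m k) ∧
      (∀ k, t k 0 = 0) ∧
      (∀ k, t k (m k) = T) ∧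
      (∀ k, ∀ i < m k, t k i < t k (i + 1)) ∧
      -- the mesh tends to zero
      Tendsto (fun k => ⨆ i ∈ Finset.range (m k), (t k (i + 1) - t k i)) atTop (𝓝 0) ∧
      -- the Riemann sums converge to the Lebesgue integral
      Tendsto (fun k => ∑ i ∈ Finset.range (m k), f (t k (i + 1)) * (t k (i + 1) - t k i))
        atTop (𝓝 (∫ s in Set.Icc 0 T, f s)) := by
  have hF : Integrable ((Set.Icc 0 T).indicator f) :=
    (integrable_indicator_iff measurableSet_Icc).2 hf
  choose m t hm h0 h1 hlt hmesh hsum using fun k : ℕ =>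
    riemann_aux T hT _ hF (1 / ((k : ℝ) + 1)) (by positivity)
  have hlim : Tendsto (fun k : ℕ => 1 / ((k : ℝ) + 1)) atTop (𝓝 0) :=
    tendsto_one_div_add_atTop_nhds_zero_nat
  have hint : ∫ s in (0 : ℝ)..T, (Set.Icc 0 T).indicator f s = ∫ s in Set.Icc 0 T, f s := by
    rw [intervalIntegral.integral_of_le hT.le, ← integral_Icc_eq_integral_Ioc,
      setIntegral_indicator measurableSet_Icc, Set.inter_self]
  have hmono : ∀ k, ∀ i ≤ m k, 0 ≤ t k i := by
    intro k i
    induction i with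
    | zero => intro _; rw [h0]
    | succ i ih => intro hi; exact (ih (by omega)).trans (hlt k i (by omega)).le
  have hmono' : ∀ k, ∀ j ≤ m k, t k (m k - j) ≤ T := by
    intro k j
    induction j with
    | zero => intro _; simp [h1]
    | succ j ih =>
      intro hj
      have := hlt k (m k - (j + 1)) (by omega)
      rw [show m k - (j + 1) + 1 = m k - j by omega] at this
      exact this.le.trans (ih (by omega))
  refine ⟨m, t, hm, h0, h1, hlt, ?_, ?_⟩
  · refine squeeze_zero (fun k => ?_) (fun k => ?_) hlim
    · refine Real.iSup_nonneg fun i => Real.iSup_nonneg fun hi => ?_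
      exact (sub_pos.2 (hlt k i (Finset.mem_range.1 hi))).le
    · refine Real.iSup_le (fun i => Real.iSup_le (fun hi => ?_) (by positivity)) (by positivity)
      exact hmesh k i (Finset.mem_range.1 hi)
  · rw [tendsto_iff_dist_tendsto_zero]
    refine squeeze_zero (fun k => dist_nonneg) (fun k => ?_) hlim
    rw [Real.dist_eq, ← hint]
    convert hsum k using 3
    refine Finset.sum_congr rfl fun i hi => ?_
    have hi := Finset.mem_range.1 hi
    rw [Set.indicator_of_mem]
    refine ⟨hmono k _ hi, ?_⟩
    have := hmono' k (m k - (i + 1)) (by omega)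
    rwa [show m k - (m k - (i + 1)) = i + 1 by omega] at this
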